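/- Let (X,𝒜) be a measurable space with dim ℳ(X) = ∞ and H the RKHS of a bounded measurable kernel k on X such that the kernel embedding Φ : ℳ(X) → H is injective. If ℳ₀(X) is a ‖·‖_H-closed subspace of ℳ(X), then the norms ‖·‖_H and ‖·‖_TV are not equivalent on ℳ₀(X). -/

import Mathlib

/-!
The obstruction is that `‖·‖_H` is Hilbertian while `‖·‖_TV` behaves like an `ℓ¹` norm on Dirac
masses. If `ℳ(X)` is infinite-dimensional, there are infinitely many points that measurable sets
distinguish pairwise (`exists_separated_seq`): otherwise the `σ`-algebra is finite. Group such
points into pairs `(x₂ᵢ, x₂ᵢ₊₁)` and consider `μ = ∑_{i<n} ±(δ_{x₂ᵢ} - δ_{x₂ᵢ₊₁}) ∈ ℳ₀(X)`. Its total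
variation is at least `n` for every choice of signs (`card_le_tvNorm`), whereas suitable signs
keep `‖Φ(μ)‖²` at most a constant times `n`, by expanding the square (`exists_signs`). So
`c ‖μ‖_TV ≤ ‖Φ(μ)‖` on `ℳ₀(X)` fails for every `c > 0`.
-/

open MeasureTheory Filter
open scoped InnerProductSpace

noncomputable section

/-- Kernel mean embedding of a finite signed measure via the canonical feature map. -/
def embed {X : Type*} [MeasurableSpace X] {H : Type*} [NormedAddCommGroup H]
    [NormedSpace ℝ H] (φ : X → H) (μ : SignedMeasure X) : H :=
  (∫ x, φ x ∂μ.toJordanDecomposition.posPart) - ∫ x, φ x ∂μ.toJordanDecomposition.negPart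

/-- Total variation norm of a finite signed measure. -/
def tvNorm {X : Type*} [MeasurableSpace X] (μ : SignedMeasure X) : ℝ :=
  (μ.totalVariation Set.univ).toReal

/-- Points that lie in the same measurable sets. -/
def indistSetoid (X : Type*) [MeasurableSpace X] : Setoid X where
  r x y := ∀ s : Set X, MeasurableSet s → (x ∈ s ↔ y ∈ s)
  iseqv := ⟨fun _ _ _ => Iff.rfl, fun h s hs => (h s hs).symm,
    fun h₁ h₂ s hs => (h₁ s hs).trans (h₂ s hs)⟩

/-- With finitely many classes of indistinguishable points there are finitely many measurable
sets, and a signed measure is determined by its values on them. -/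
lemma finiteDimensional_of_finite_quotient {X : Type*} [MeasurableSpace X]
    [Finite (Quotient (indistSetoid X))] : FiniteDimensional ℝ (SignedMeasure X) := by
  let L : SignedMeasure X →ₗ[ℝ] (Set (Quotient (indistSetoid X)) → ℝ) :=
    { toFun := fun μ T => μ (Quotient.mk (indistSetoid X) ⁻¹' T)
      map_add' := fun _ _ => by ext; simp
      map_smul' := fun _ _ => by ext; simp }
  refine FiniteDimensional.of_injective L fun μ ν h => ?_
  ext s hs
  have hT : Quotient.mk (indistSetoid X) ⁻¹' (Quotient.mk (indistSetoid X) '' s) = s := by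
    refine Set.Subset.antisymm ?_ (Set.subset_preimage_image _ _)
    rintro x ⟨y, hy, hxy⟩
    exact ((Quotient.exact hxy : (indistSetoid X).r y x) s hs).1 hy
  have := congrFun h (Quotient.mk (indistSetoid X) '' s)
  simpa only [L, LinearMap.coe_mk, AddHom.coe_mk, hT] using this

lemma exists_separated_seq {X : Type*} [MeasurableSpace X]
    (hdim : ¬ FiniteDimensional ℝ (SignedMeasure X)) :
    ∃ x : ℕ → X, ∀ i j, i ≠ j → ∃ s, MeasurableSet s ∧ x i ∈ s ∧ x j ∉ s := by
  have hinf : Infinite (Quotient (indistSetoid X)) := by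
    by_contra h
    rw [not_infinite_iff_finite] at h
    exact hdim finiteDimensional_of_finite_quotient
  let f := Infinite.natEmbedding (Quotient (indistSetoid X))
  refine ⟨fun i => (f i).out, fun i j hij => ?_⟩
  by_contra! h
  refine hij (f.injective ?_)
  rw [← Quotient.out_eq (f i), ← Quotient.out_eq (f j)]
  refine Quotient.sound (s := indistSetoid X) fun s hs => ⟨h s hs, fun hj => ?_⟩
  by_contra hi
  exact h sᶜ hs.compl hi hj

/-- The orientations are chosen one after the other, each making the new cross term
nonpositive. -/
lemma exists_signs {H : Type*} [NormedAddCommGroup H] [InnerProductSpace ℝ H]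
    (v : ℕ → H) (D : ℝ) (hv : ∀ i, ‖v i‖ ^ 2 ≤ D) (n : ℕ) :
    ∃ p q : ℕ → ℕ,
      (∀ i, (p i = 2 * i ∧ q i = 2 * i + 1) ∨ (p i = 2 * i + 1 ∧ q i = 2 * i)) ∧
      ‖∑ i ∈ Finset.range n, (v (p i) - v (q i))‖ ^ 2 ≤ n * (4 * D) := by
  induction n with
  | zero => exact ⟨fun i => 2 * i, fun i => 2 * i + 1, fun i => by simp, by simp⟩
  | succ n ih =>
    obtain ⟨p, q, hpq, hle⟩ := ih
    have key : ∀ a b : ℕ, ((a = 2 * n ∧ b = 2 * n + 1) ∨ (a = 2 * n + 1 ∧ b = 2 * n)) →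
        ⟪∑ i ∈ Finset.range n, (v (p i) - v (q i)), v a - v b⟫_ℝ ≤ 0 →
        ∃ p q : ℕ → ℕ,
          (∀ i, (p i = 2 * i ∧ q i = 2 * i + 1) ∨ (p i = 2 * i + 1 ∧ q i = 2 * i)) ∧
          ‖∑ i ∈ Finset.range (n + 1), (v (p i) - v (q i))‖ ^ 2 ≤ (n + 1 : ℕ) * (4 * D) := by
      intro a b hab hin
      refine ⟨Function.update p n a, Function.update q n b, fun i => ?_, ?_⟩
      · by_cases hi : i = n
        · subst hi; simpa using hab
        · simpa [hi] using hpq i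
      · have hs : ∑ i ∈ Finset.range n,
            (v (Function.update p n a i) - v (Function.update q n b i)) =
            ∑ i ∈ Finset.range n, (v (p i) - v (q i)) := by
          refine Finset.sum_congr rfl fun i hi => ?_
          have : i ≠ n := (Finset.mem_range.1 hi).ne
          simp [this]
        rw [Finset.sum_range_succ, hs]
        simp only [Function.update_self]
        have h1 := norm_add_sq_real (∑ i ∈ Finset.range n, (v (p i) - v (q i))) (v a - v b)
        have h2 := parallelogram_law_with_norm ℝ (v a) (v b)
        push_cast
        nlinarith [hv a, hv b, mul_self_nonneg ‖v a + v b‖]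
    rcases le_total ⟪∑ i ∈ Finset.range n, (v (p i) - v (q i)), v (2 * n) - v (2 * n + 1)⟫_ℝ 0
      with h | h
    · exact key _ _ (Or.inl ⟨rfl, rfl⟩) h
    · refine key _ _ (Or.inr ⟨rfl, rfl⟩) ?_
      rw [← neg_sub (v (2 * n)), inner_neg_right]
      linarith

lemma apply_le_tvNorm {X : Type*} [MeasurableSpace X] (μ : SignedMeasure X) {s : Set X}
    (hs : MeasurableSet s) : μ s ≤ tvNorm μ := by
  have h1 : μ s = μ.toJordanDecomposition.posPart.real s -
      μ.toJordanDecomposition.negPart.real s := by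
    conv_lhs => rw [← μ.toSignedMeasure_toJordanDecomposition]
    exact Measure.toSignedMeasure_sub_apply hs
  have h2 : tvNorm μ = μ.toJordanDecomposition.posPart.real Set.univ +
      μ.toJordanDecomposition.negPart.real Set.univ :=
    measureReal_add_apply
  have h3 : μ.toJordanDecomposition.posPart.real s ≤
      μ.toJordanDecomposition.posPart.real Set.univ := measureReal_mono (Set.subset_univ s)
  have h4 : 0 ≤ μ.toJordanDecomposition.negPart.real s := measureReal_nonneg
  have h5 : 0 ≤ μ.toJordanDecomposition.negPart.real Set.univ := measureReal_nonneg
  linarith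

/-- The embedding may be computed from any decomposition into finite measures, not only from the
Jordan decomposition. -/
lemma embed_sub {X : Type*} [MeasurableSpace X] {H : Type*} [NormedAddCommGroup H]
    [NormedSpace ℝ H] (φ : X → H) (hφ : ∀ ν : Measure X, IsFiniteMeasure ν → Integrable φ ν)
    (α β : Measure X) [IsFiniteMeasure α] [IsFiniteMeasure β] :
    embed φ (α.toSignedMeasure - β.toSignedMeasure) = (∫ x, φ x ∂α) - ∫ x, φ x ∂β := by
  set μ := α.toSignedMeasure - β.toSignedMeasure with hμ
  have h := μ.toSignedMeasure_toJordanDecomposition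
  have h1 : μ.toJordanDecomposition.posPart + β = α + μ.toJordanDecomposition.negPart := by
    rw [← Measure.toSignedMeasure_eq_toSignedMeasure_iff, Measure.toSignedMeasure_add,
      Measure.toSignedMeasure_add, ← sub_eq_sub_iff_add_eq_add, ← hμ]
    exact h
  have h2 := congrArg (fun ν => ∫ x, φ x ∂ν) h1
  beta_reduce at h2
  rw [integral_add_measure (hφ _ inferInstance) (hφ _ inferInstance),
    integral_add_measure (hφ _ inferInstance) (hφ _ inferInstance)] at h2
  exact sub_eq_sub_iff_add_eq_add.2 h2

/-- The empirical measure (not normalised) of the points `y i`, `i < n`. -/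
def diracSum {X : Type*} [MeasurableSpace X] (y : ℕ → X) (n : ℕ) : Measure X :=
  ∑ i ∈ Finset.range n, Measure.dirac (y i)

instance {X : Type*} [MeasurableSpace X] (y : ℕ → X) (n : ℕ) :
    IsFiniteMeasure (diracSum y n) := by
  unfold diracSum; infer_instance

lemma diracSum_real_of_mem {X : Type*} [MeasurableSpace X] (y : ℕ → X) (n : ℕ) {s : Set X}
    (hs : MeasurableSet s) (h : ∀ i < n, y i ∈ s) : (diracSum y n).real s = n := by
  have : diracSum y n s = n := by
    simp only [diracSum, Measure.finsetSum_apply, Measure.dirac_apply' _ hs]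
    rw [Finset.sum_congr rfl (g := fun _ => 1) fun i hi => by simp [h i (Finset.mem_range.1 hi)]]
    simp
  simp [Measure.real, this]

lemma diracSum_real_of_notMem {X : Type*} [MeasurableSpace X] (y : ℕ → X) (n : ℕ) {s : Set X}
    (hs : MeasurableSet s) (h : ∀ i < n, y i ∉ s) : (diracSum y n).real s = 0 := by
  have : diracSum y n s = 0 := by
    simp only [diracSum, Measure.finsetSum_apply, Measure.dirac_apply' _ hs]
    exact Finset.sum_eq_zero fun i hi => by simp [h i (Finset.mem_range.1 hi)]
  simp [Measure.real, this]

/-- The set `⋃ᵢ ⋂ⱼ Aᵢⱼ`, with `Aᵢⱼ` containing `y i` but not `z j`, has measure `n`. -/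
lemma card_le_tvNorm {X : Type*} [MeasurableSpace X] (y z : ℕ → X) (n : ℕ)
    (hsep : ∀ i j, ∃ s, MeasurableSet s ∧ y i ∈ s ∧ z j ∉ s) :
    (n : ℝ) ≤ tvNorm ((diracSum y n).toSignedMeasure - (diracSum z n).toSignedMeasure) := by
  choose A hA hy hz using hsep
  have hS : MeasurableSet (⋃ i, ⋂ j, A i j) :=
    MeasurableSet.iUnion fun i => MeasurableSet.iInter fun j => hA i j
  refine le_trans (le_of_eq ?_) (apply_le_tvNorm _ hS)
  rw [Measure.toSignedMeasure_sub_apply hS, diracSum_real_of_mem y n hS,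
    diracSum_real_of_notMem z n hS, sub_zero]
  · intro j _ hj
    obtain ⟨i, hi⟩ := Set.mem_iUnion.1 hj
    exact hz i j (Set.mem_iInter.1 hi j)
  · exact fun i _ => Set.mem_iUnion.2 ⟨i, Set.mem_iInter.2 fun j => hy i j⟩

lemma integral_diracSum {X : Type*} [MeasurableSpace X] {H : Type*} [NormedAddCommGroup H]
    [NormedSpace ℝ H] [CompleteSpace H] (φ : X → H) (hφm : StronglyMeasurable φ)
    (hφ : ∀ ν : Measure X, IsFiniteMeasure ν → Integrable φ ν) (y : ℕ → X) (n : ℕ) :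
    ∫ x, φ x ∂(diracSum y n) = ∑ i ∈ Finset.range n, φ (y i) := by
  rw [diracSum, integral_finsetSum_measure fun i _ => hφ _ inferInstance]
  exact Finset.sum_congr rfl fun i _ => integral_dirac' φ _ hφm

/-- **Theorem (non-equivalence on ℳ₀).** Let `(X,𝒜)` be a measurable space with
`dim ℳ(X) = ∞`, and let `H` be the RKHS of a bounded measurable kernel `k` (presented via
its canonical feature map `φ`) such that the kernel embedding `Φ : ℳ(X) → H` is injective.
If `ℳ₀(X)` is a `‖·‖_H`-closed subspace of `ℳ(X)`, then `‖·‖_H` and `‖·‖_TV` are not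
equivalent on `ℳ₀(X)`. -/
theorem non_equivalence_on_M0
    {X : Type*} [MeasurableSpace X]
    {H : Type*} [NormedAddCommGroup H] [InnerProductSpace ℝ H]
    (k : X → X → ℝ) (φ : X → H)
    (hk : ∀ x y, k x y = ⟪φ x, φ y⟫_ℝ)
    (hkm : Measurable (Function.uncurry k))
    (hbdd : ∃ C : ℝ, ∀ x y, |k x y| ≤ C)
    (hφ : StronglyMeasurable φ)
    (hdense : (Submodule.span ℝ (Set.range φ)).topologicalClosure = ⊤)
    (hdim : ¬ FiniteDimensional ℝ (SignedMeasure X))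
    (hinj : Function.Injective (embed (X := X) φ))
    (hclosed : ∀ (u : ℕ → SignedMeasure X) (μ : SignedMeasure X),
      (∀ n, u n Set.univ = 0) →
      Tendsto (fun n => ‖embed φ (u n) - embed φ μ‖) atTop (nhds 0) →
      μ Set.univ = 0) :
    ¬ ∃ c C : ℝ, 0 < c ∧ 0 < C ∧ ∀ μ : SignedMeasure X, μ Set.univ = 0 →
        c * tvNorm μ ≤ ‖embed φ μ‖ ∧ ‖embed φ μ‖ ≤ C * tvNorm μ := by
  rintro ⟨c, C, hc, -, hcC⟩
  obtain ⟨K, hK⟩ := hbdd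
  obtain ⟨x, hx⟩ := exists_separated_seq hdim
  have hφK : ∀ a, ‖φ a‖ ^ 2 ≤ K := fun a => by
    rw [← real_inner_self_eq_norm_sq, ← hk]
    exact (le_abs_self _).trans (hK a a)
  have hint : ∀ ν : Measure X, IsFiniteMeasure ν → Integrable φ ν := fun ν _ =>
    Integrable.of_bound hφ.aestronglyMeasurable (√K)
      (Eventually.of_forall fun a => Real.le_sqrt_of_sq_le (hφK a))
  have hmain : ∀ n : ℕ, ∃ μ : SignedMeasure X,
      μ Set.univ = 0 ∧ (n : ℝ) ≤ tvNorm μ ∧ ‖embed φ μ‖ ^ 2 ≤ n * (4 * K) := by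
    intro n
    obtain ⟨p, q, hpq, hle⟩ := exists_signs (fun i => φ (x i)) K (fun i => hφK _) n
    refine ⟨(diracSum (x ∘ p) n).toSignedMeasure - (diracSum (x ∘ q) n).toSignedMeasure,
      ?_, ?_, ?_⟩
    · rw [Measure.toSignedMeasure_sub_apply MeasurableSet.univ,
        diracSum_real_of_mem _ n MeasurableSet.univ fun _ _ => Set.mem_univ _,
        diracSum_real_of_mem _ n MeasurableSet.univ fun _ _ => Set.mem_univ _, sub_self]
    · refine card_le_tvNorm _ _ n fun i j => hx (p i) (q j) ?_
      have := hpq i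
      have := hpq j
      obtain rfl | hij := eq_or_ne i j <;> omega
    · by_cases hH : CompleteSpace H
      · rw [embed_sub φ hint, integral_diracSum φ hφ hint, integral_diracSum φ hφ hint,
          ← Finset.sum_sub_distrib]
        exact hle
      · -- Over an incomplete space the Bochner integral is `0` by convention, hence so is `embed`.
        have h0 : ∀ ν : Measure X, ∫ a, φ a ∂ν = 0 := fun ν => by
          simp [integral, hH]
        have hK0 : 0 ≤ K := (sq_nonneg _).trans (hφK (x 0))
        simp only [embed, h0, sub_self, norm_zero]
        nlinarith [mul_nonneg (Nat.cast_nonneg (α := ℝ) n) hK0]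
  obtain ⟨n, hn⟩ := exists_nat_gt (4 * K / c ^ 2)
  rw [div_lt_iff₀ (by positivity)] at hn
  obtain ⟨μ, hμ0, hμn, hμe⟩ := hmain n
  have h1 : c * n ≤ ‖embed φ μ‖ := (mul_le_mul_of_nonneg_left hμn hc.le).trans (hcC μ hμ0).1
  have h2 : (c * n) ^ 2 ≤ n * (4 * K) := (pow_le_pow_left₀ (by positivity) h1 2).trans hμe
  have hK0 : 0 ≤ K := (sq_nonneg _).trans (hφK (x 0))
  have hn0 : (0 : ℝ) < n := by
    by_contra h
    have : (n : ℝ) = 0 := le_antisymm (not_lt.1 h) (Nat.cast_nonneg n)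
    rw [this] at hn
    linarith
  nlinarith [mul_lt_mul_of_pos_left hn hn0]

end
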